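/- Let p and q be distinct primes, H a finite abelian p-group, m a positive integer, and G = H ⊕ C_{q^m}. If S is a zero-sum free sequence over G with k(S) = k(G), then every element of S lies in H ⊕ {0} or in {0} ⊕ C_{q^m}; that is, S = S_p · S_q where S_p is a zero-sum free sequence over the p-primary component H ⊕ {0} of G and S_q is a zero-sum free sequence over the q-primary component {0} ⊕ C_{q^m} of G. -/

import Mathlib

/-- The cross number `k(S)` of a sequence (finite multiset) `S` over an additive group:
the sum, with multiplicity, of the reciprocals of the orders of its elements. -/
noncomputable def crossNum {G : Type*} [AddCommGroup G] (S : Multiset G) : ℝ :=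
  (S.map fun g => ((addOrderOf g : ℝ))⁻¹).sum

/-- `S` is zero-sum free: no nonempty sub-multiset of `S` has sum `0`. -/
def IsZeroSumFree {G : Type*} [AddCommGroup G] (S : Multiset G) : Prop :=
  ∀ T : Multiset G, T ≤ S → T ≠ 0 → T.sum ≠ 0

/-- The little cross number `k(G)`: the maximal cross number of a zero-sum free
sequence over `G`. -/
noncomputable def littleK (G : Type*) [AddCommGroup G] : ℝ :=
  sSup {x : ℝ | ∃ S : Multiset G, IsZeroSumFree S ∧ crossNum S = x}

/-!
Over a field `F` of characteristic `p`, the group algebra `F[H]` of a `p`-group `H` is filtered so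
that `1 - X^h` lies in degree `1 / ord h` and every degree above `k(H)` vanishes. Give each term
`(h, c)` of a zero-sum free sequence over `H ⊕ C_n`, `p ∤ n`, a shift `r ∈ C_n`, and for a primitive
character `ψ` of `C_n` consider the product of the factors `1 - ψ(-rc) X^(h, c)`. Its constant
coefficient is `1`, so its image in `F[H]` under some character `ψ(j ·)` is nonzero, and hence the
terms with `j c = r c` have total weight `∑ 1 / ord h ≤ k(H)`. If `n` is a prime power, shifts
chosen greedily, in the order of increasing `ord c`, keep the weights at any two `j` within `1` of
each other. The average weight is `k(S)`, so `k(S) ≤ k(H) + 1 - 1/n`, which is sharp.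

If `S` is extremal, all weights agree modulo `1`. Let `g = (h, c)` be a term with `h, c ≠ 0` and
`ord c` maximal. Terms in `C_n` contribute integral weights, so the weights of the terms up to `g`
are all equal, which forces these terms to have cross number at most `k(H)`. The remaining terms
then have cross number at least `1 - 1/n` in `C_n` and represent every element of `C_n`, so `g` may
be replaced by `(h, 0)`; this increases the cross number.
-/

section ZeroSumFree

variable {G G' : Type*} [AddCommGroup G] [AddCommGroup G']

lemma IsZeroSumFree.mono {S T : Multiset G} (hS : IsZeroSumFree S) (hT : T ≤ S) :
    IsZeroSumFree T :=
  fun U hU => hS U (hU.trans hT)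

lemma IsZeroSumFree.of_map (φ : G →+ G') {S : Multiset G} (hS : IsZeroSumFree (S.map φ)) :
    IsZeroSumFree S := by
  intro T hT hT0 hsum
  refine hS (T.map φ) (Multiset.map_le_map hT) (by simpa using hT0) ?_
  rw [← map_multiset_sum, hsum, map_zero]

lemma isZeroSumFree_replicate {g : G} {k : ℕ} (hk : k < addOrderOf g) :
    IsZeroSumFree (Multiset.replicate k g) := by
  intro T hT hT0 hsum
  obtain ⟨l, hl, rfl⟩ := Multiset.le_replicate_iff.1 hT
  rw [Multiset.sum_replicate] at hsum
  have hl0 : l ≠ 0 := by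
    rintro rfl
    exact hT0 (Multiset.replicate_zero g)
  exact (Nat.le_of_dvd (Nat.pos_of_ne_zero hl0) (addOrderOf_dvd_of_nsmul_eq_zero hsum)).not_gt
    (hl.trans_lt hk)

lemma le_cons_iff_le_or_exists_eq_cons {α : Type*} {T S : Multiset α} {a : α} :
    T ≤ a ::ₘ S ↔ T ≤ S ∨ ∃ U ≤ S, T = a ::ₘ U := by
  simp only [← Multiset.mem_powerset, Multiset.powerset_cons, Multiset.mem_add, Multiset.mem_map,
    eq_comm]

lemma exists_add_eq_of_le_add {α : Type*} {T S S' : Multiset α} (h : T ≤ S + S') :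
    ∃ U ≤ S, ∃ U' ≤ S', U + U' = T := by
  classical
  exact ⟨T ∩ S, Multiset.inter_le_right, T - S, tsub_le_iff_left.2 h,
    by rw [add_comm, Multiset.sub_add_inter]⟩

lemma isZeroSumFree_cons {g : G} {S : Multiset G} :
    IsZeroSumFree (g ::ₘ S) ↔ IsZeroSumFree S ∧ ∀ T ≤ S, T.sum ≠ -g := by
  constructor
  · refine fun h => ⟨h.mono (Multiset.le_cons_self S g), fun T hT hsum => ?_⟩
    exact h (g ::ₘ T) (Multiset.cons_le_cons g hT) Multiset.cons_ne_zero (by simp [hsum])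
  · rintro ⟨hS, hg⟩ T hT hT0 hsum
    rcases le_cons_iff_le_or_exists_eq_cons.1 hT with hT | ⟨U, hU, rfl⟩
    · exact hS T hT hT0 hsum
    · rw [Multiset.sum_cons] at hsum
      exact hg U hU (eq_neg_of_add_eq_zero_right hsum)

lemma IsZeroSumFree.add_of_map (φ : G →+ G') {S T : Multiset G} (hS : IsZeroSumFree S)
    (hφS : ∀ x ∈ S, φ x = 0) (hT : IsZeroSumFree (T.map φ)) : IsZeroSumFree (S + T) := by
  intro U hU hU0 hsum
  obtain ⟨U₁, hU₁, U₂, hU₂, rfl⟩ := exists_add_eq_of_le_add hU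
  have hφU₁ : (U₁.map φ).sum = 0 :=
    Multiset.sum_eq_zero (by simpa using fun x hx => hφS x (Multiset.mem_of_le hU₁ hx))
  have hφU₂ : (U₂.map φ).sum = 0 := by
    simpa [map_multiset_sum, hφU₁] using congrArg φ hsum
  have hU₂0 : U₂ = 0 := by
    by_contra h
    exact hT _ (Multiset.map_le_map hU₂) (by simpa using h) hφU₂
  subst hU₂0
  rw [add_zero] at hU0 hsum
  exact hS U₁ hU₁ hU0 hsum

lemma IsZeroSumFree.add_map_inl {H C : Type*} [AddCommGroup H] [AddCommGroup C]
    {S : Multiset (H × C)} {R : Multiset H} (hS : IsZeroSumFree S) (hS0 : ∀ x ∈ S, x.1 = 0)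
    (hR : IsZeroSumFree R) :
    IsZeroSumFree (S + R.map (AddMonoidHom.inl H C)) :=
  hS.add_of_map (AddMonoidHom.fst H C) hS0 (by simpa [Function.comp_def] using hR)

end ZeroSumFree

section CrossNum

variable {G G' : Type*} [AddCommGroup G] [AddCommGroup G']

@[simp] lemma crossNum_zero : crossNum (0 : Multiset G) = 0 := by simp [crossNum]

@[simp] lemma crossNum_cons (g : G) (S : Multiset G) :
    crossNum (g ::ₘ S) = (addOrderOf g : ℝ)⁻¹ + crossNum S := by simp [crossNum]

@[simp] lemma crossNum_add (S T : Multiset G) : crossNum (S + T) = crossNum S + crossNum T := by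
  simp [crossNum]

lemma crossNum_sum {ι : Type*} (s : Finset ι) (S : ι → Multiset G) :
    crossNum (∑ i ∈ s, S i) = ∑ i ∈ s, crossNum (S i) :=
  map_sum (⟨⟨crossNum, crossNum_zero⟩, crossNum_add⟩ : Multiset G →+ ℝ) S s

lemma crossNum_replicate (k : ℕ) (g : G) :
    crossNum (Multiset.replicate k g) = k * (addOrderOf g : ℝ)⁻¹ := by simp [crossNum]

lemma crossNum_map {φ : G →+ G'} (hφ : Function.Injective φ) (S : Multiset G) :
    crossNum (S.map φ) = crossNum S := by
  simp [crossNum, addOrderOf_injective φ hφ]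

lemma crossNum_add_map_inl {H C : Type*} [AddCommGroup H] [AddCommGroup C]
    (S : Multiset (H × C)) (R : Multiset H) :
    crossNum (S + R.map (AddMonoidHom.inl H C)) = crossNum S + crossNum R := by
  rw [crossNum_add, crossNum_map (Prod.mk_left_injective 0)]

lemma littleK_eq_of_forall_le {R : Multiset G} (hR : IsZeroSumFree R)
    (hmax : ∀ S : Multiset G, IsZeroSumFree S → crossNum S ≤ crossNum R) :
    littleK G = crossNum R :=
  IsGreatest.csSup_eq ⟨⟨R, hR, rfl⟩, by rintro _ ⟨S, hS, rfl⟩; exact hmax S hS⟩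

end CrossNum

section WeightIdeal

variable {A ι : Type*} [CommRing A] [Fintype ι] {x : ι → A} {θ : ι → ℝ}

/-- The ideal spanned by the monomials in the `x i` of weighted degree at least `w`, where `x i`
has weight `θ i`. For a group algebra these ideals form the filtration in which `1 - X^h` has degree
`1 / ord h`. -/
def weightIdeal (x : ι → A) (θ : ι → ℝ) (w : ℝ) : Ideal A :=
  Ideal.span {a | ∃ k : ι → ℕ, w ≤ ∑ i, k i * θ i ∧ a = ∏ i, x i ^ k i}

lemma weightIdeal_zero : weightIdeal x θ 0 = ⊤ :=
  (Ideal.eq_top_iff_one _).2 (Ideal.subset_span ⟨0, by simp, by simp⟩)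

lemma weightIdeal_antitone : Antitone (weightIdeal x θ) := by
  refine fun v w hvw => Ideal.span_mono ?_
  rintro _ ⟨k, hk, rfl⟩
  exact ⟨k, hvw.trans hk, rfl⟩

lemma weightIdeal_mul_le (v w : ℝ) :
    weightIdeal x θ v * weightIdeal x θ w ≤ weightIdeal x θ (v + w) := by
  rw [weightIdeal, weightIdeal, Ideal.span_mul_span, Ideal.span_le]
  rintro _ ⟨_, ⟨k, hk, rfl⟩, _, ⟨l, hl, rfl⟩, rfl⟩
  refine Ideal.subset_span ⟨k + l, ?_, ?_⟩
  · simp only [Pi.add_apply, Nat.cast_add, add_mul, Finset.sum_add_distrib]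
    exact add_le_add hk hl
  · simp only [Pi.add_apply, pow_add, Finset.prod_mul_distrib]

lemma pow_mem_weightIdeal (i : ι) (k : ℕ) :
    x i ^ k ∈ weightIdeal x θ (k * θ i) := by
  classical
  refine Ideal.subset_span ⟨Pi.single i k, ?_, ?_⟩
  · rw [Finset.sum_eq_single i (fun j _ hj => by simp [hj]) (by simp), Pi.single_eq_same]
  · rw [Finset.prod_eq_single i (fun j _ hj => by simp [hj]) (by simp), Pi.single_eq_same]

lemma multiset_prod_mem_weightIdeal {α : Type*} {f : α → A} {v : α → ℝ} {T : Multiset α}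
    (hf : ∀ a ∈ T, f a ∈ weightIdeal x θ (v a)) :
    (T.map f).prod ∈ weightIdeal x θ (T.map v).sum := by
  induction T using Multiset.induction_on with
  | empty => simp [weightIdeal_zero]
  | cons a T ih =>
    rw [Multiset.map_cons, Multiset.map_cons, Multiset.prod_cons, Multiset.sum_cons]
    exact weightIdeal_mul_le _ _ (Ideal.mul_mem_mul (hf a (Multiset.mem_cons_self a T))
      (ih fun b hb => hf b (Multiset.mem_cons_of_mem hb)))

lemma weightIdeal_eq_bot {N : ι → ℕ} (hx : ∀ i, x i ^ N i = 0) (hθ : ∀ i, 0 ≤ θ i) {w : ℝ}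
    (hw : ∑ i, ((N i - 1 : ℕ) : ℝ) * θ i < w) : weightIdeal x θ w = ⊥ := by
  rw [weightIdeal, Ideal.span_eq_bot]
  rintro _ ⟨k, hk, rfl⟩
  obtain ⟨i, hi⟩ : ∃ i, N i ≤ k i := by
    by_contra! hlt
    refine (hw.trans_le hk).not_ge (Finset.sum_le_sum fun i _ => ?_)
    gcongr
    · exact hθ i
    · exact Nat.le_sub_one_of_lt (hlt i)
  exact Finset.prod_eq_zero (Finset.mem_univ i) (pow_eq_zero_of_le hi (hx i))

end WeightIdeal

section PGroup

lemma one_sub_prod_mem {A ι : Type*} [CommRing A] {I : Ideal A} {s : Finset ι} {y : ι → A}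
    (hy : ∀ i ∈ s, 1 - y i ∈ I) : 1 - ∏ i ∈ s, y i ∈ I := by
  rw [← Ideal.Quotient.eq, map_one, map_prod, eq_comm]
  refine Finset.prod_eq_one fun i hi => ?_
  rw [← map_one (Ideal.Quotient.mk I), eq_comm, Ideal.Quotient.eq]
  exact hy i hi

variable {p : ℕ} [Fact p.Prime] {A : Type*} [CommRing A] [CharP A p]

lemma addChar_sum_eq_prod {G M ι : Type*} [AddCommMonoid G] [CommMonoid M] (X : AddChar G M)
    (s : Finset ι) (f : ι → G) : X (∑ i ∈ s, f i) = ∏ i ∈ s, X (f i) :=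
  map_prod X.toMonoidHom (fun i => Multiplicative.ofAdd (f i)) s

lemma one_sub_pow_gcd_dvd (y : A) (n c : ℕ) : (1 - y) ^ (p ^ n).gcd c ∣ 1 - y ^ c := by
  obtain ⟨s, -, hs⟩ := (Nat.dvd_prime_pow Fact.out).1 (Nat.gcd_dvd_left (p ^ n) c)
  obtain ⟨d, hd⟩ := Nat.gcd_dvd_right (p ^ n) c
  rw [hs] at hd ⊢
  rw [sub_pow_char_pow, one_pow, hd, pow_mul]
  exact one_sub_dvd_one_sub_pow _ d

lemma gcd_val_mul_inv {N : ℕ} [NeZero N] (c : ZMod N) :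
    (N.gcd c.val : ℝ) * (N : ℝ)⁻¹ = (addOrderOf c : ℝ)⁻¹ := by
  conv_rhs => rw [← ZMod.natCast_zmod_val c, ZMod.addOrderOf_coe _ (NeZero.ne N)]
  rw [Nat.cast_div (Nat.gcd_dvd_left N c.val), inv_div, div_eq_mul_inv]
  exact_mod_cast Nat.gcd_ne_zero_left (NeZero.ne N)

lemma addOrderOf_pi_single_one {ι : Type*} [DecidableEq ι] (N : ι → ℕ) (i : ι) :
    addOrderOf (Pi.single i 1 : ∀ i, ZMod (N i)) = N i :=
  (addOrderOf_injective (AddMonoidHom.single (fun i => ZMod (N i)) i)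
    (Pi.single_injective (M := fun i => ZMod (N i)) i) 1).trans (ZMod.addOrderOf_one _)

variable {ι : Type*} [Fintype ι] [DecidableEq ι]

lemma one_sub_addChar_mem_weightIdeal {n : ι → ℕ} (X : AddChar (∀ i, ZMod (p ^ n i)) A)
    (h : ∀ i, ZMod (p ^ n i)) :
    1 - X h ∈ weightIdeal (fun i => 1 - X (Pi.single i 1)) (fun i => ((p ^ n i : ℕ) : ℝ)⁻¹)
      (addOrderOf h : ℝ)⁻¹ := by
  have hXh : X h = ∏ i, X (Pi.single i 1) ^ (h i).val := by
    conv_lhs => rw [← Finset.univ_sum_single h]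
    rw [addChar_sum_eq_prod]
    refine Finset.prod_congr rfl fun i _ => ?_
    rw [← AddChar.map_nsmul_eq_pow, ← Pi.single_smul, nsmul_one, ZMod.natCast_zmod_val]
  rw [hXh]
  refine one_sub_prod_mem fun i _ => ?_
  have hord : (addOrderOf h : ℝ)⁻¹ ≤ (addOrderOf (h i) : ℝ)⁻¹ := by
    have hdvd := addOrderOf_map_dvd (Pi.evalAddMonoidHom _ i) h
    rw [Pi.evalAddMonoidHom_apply] at hdvd
    have hpos := addOrderOf_pos (h i)
    gcongr
    exact Nat.le_of_dvd (addOrderOf_pos h) hdvd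
  refine weightIdeal_antitone hord ?_
  rw [← gcd_val_mul_inv]
  exact Ideal.mem_of_dvd _ (one_sub_pow_gcd_dvd _ _ _) (pow_mem_weightIdeal i _)

/-- The sequence over `⨁ C_{N i}` in which the `i`-th basis element occurs `N i - 1` times; for
prime powers `N i = p ^ n i` it attains the little cross number. -/
def basisSeq (N : ι → ℕ) : Multiset (∀ i, ZMod (N i)) :=
  ∑ i, Multiset.replicate (N i - 1) (Pi.single i 1)

lemma crossNum_basisSeq (N : ι → ℕ) :
    crossNum (basisSeq N) = ∑ i, ((N i - 1 : ℕ) : ℝ) * (N i : ℝ)⁻¹ := by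
  simp only [basisSeq, crossNum_sum, crossNum_replicate, addOrderOf_pi_single_one]

lemma isZeroSumFree_basisSeq {N : ι → ℕ} (hN : ∀ i, N i ≠ 0) : IsZeroSumFree (basisSeq N) := by
  suffices h : ∀ s : Finset ι, IsZeroSumFree
      (∑ i ∈ s, Multiset.replicate (N i - 1) (Pi.single i 1 : ∀ i, ZMod (N i))) from h Finset.univ
  intro s
  induction s using Finset.induction_on with
  | empty => exact fun T hT hT0 => absurd (Multiset.le_zero.1 hT) hT0
  | insert a s ha ih =>
    rw [Finset.sum_insert ha, add_comm]
    refine ih.add_of_map (Pi.evalAddMonoidHom _ a) (fun x hx => ?_) ?_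
    · obtain ⟨i, hi, hx⟩ := Multiset.mem_sum.1 hx
      rw [Multiset.eq_of_mem_replicate hx]
      exact Pi.single_eq_of_ne (ne_of_mem_of_not_mem hi ha).symm 1
    · rw [Multiset.map_replicate, Pi.evalAddMonoidHom_apply, Pi.single_eq_same]
      refine isZeroSumFree_replicate ?_
      rw [ZMod.addOrderOf_one]
      exact Nat.sub_one_lt (hN a)

lemma prod_one_sub_addChar_eq_zero {n : ι → ℕ} (X : AddChar (∀ i, ZMod (p ^ n i)) A)
    {T : Multiset (∀ i, ZMod (p ^ n i))}
    (hT : crossNum (basisSeq fun i => p ^ n i) < crossNum T) :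
    (T.map fun h => 1 - X h).prod = 0 := by
  have hmem : _ ∈ weightIdeal _ _ (crossNum T) := multiset_prod_mem_weightIdeal fun h (_ : h ∈ T) =>
    one_sub_addChar_mem_weightIdeal X h
  rw [crossNum_basisSeq] at hT
  rwa [weightIdeal_eq_bot (fun i => ?_) (fun i => by positivity) hT, Ideal.mem_bot] at hmem
  rw [sub_pow_char_pow, one_pow, ← AddChar.map_nsmul_eq_pow]
  nth_rw 1 [← addOrderOf_pi_single_one (fun i => p ^ n i) i]
  rw [addOrderOf_nsmul_eq_zero, AddChar.map_zero_eq_one, sub_self]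

lemma exists_addEquiv_pi_zmod_prime_pow {H : Type*} [AddCommGroup H] [Finite H]
    (hH : ∃ k, Nat.card H = p ^ k) :
    ∃ (κ : Type) (_ : Fintype κ) (n : κ → ℕ), Nonempty (H ≃+ ∀ i, ZMod (p ^ n i)) := by
  classical
  obtain ⟨k, hk⟩ := hH
  obtain ⟨κ, _, N, -, ⟨e⟩⟩ := AddCommGroup.equiv_directSum_zmod_of_finite' H
  let φ : H ≃+ ∀ i, ZMod (N i) := e.trans (DirectSum.addEquivProd _)
  have hN (i : κ) : ∃ n, N i = p ^ n := by
    have hdvd : N i ∣ p ^ k := by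
      rw [← hk, Nat.card_congr φ.toEquiv, ← addOrderOf_pi_single_one N i]
      exact addOrderOf_dvd_natCard _
    obtain ⟨n, -, hn⟩ := (Nat.dvd_prime_pow Fact.out).1 hdvd
    exact ⟨n, hn⟩
  choose n hn using hN
  obtain rfl : N = fun i => p ^ n i := funext hn
  exact ⟨κ, inferInstance, n, ⟨φ⟩⟩

lemma exists_isZeroSumFree_forall_prod_one_sub_eq_zero {H : Type*} [AddCommGroup H] [Finite H]
    (hH : ∃ k, Nat.card H = p ^ k) (X : AddChar H A) :
    ∃ R : Multiset H, IsZeroSumFree R ∧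
      ∀ T : Multiset H, crossNum R < crossNum T → (T.map fun h => 1 - X h).prod = 0 := by
  classical
  obtain ⟨κ, _, n, ⟨φ⟩⟩ := exists_addEquiv_pi_zmod_prime_pow hH
  have hcross (S : Multiset (∀ i, ZMod (p ^ n i))) : crossNum (S.map φ.symm) = crossNum S :=
    crossNum_map (φ := φ.symm.toAddMonoidHom) φ.symm.injective S
  refine ⟨(basisSeq fun i => p ^ n i).map φ.symm, ?_, fun T hT => ?_⟩
  · refine IsZeroSumFree.of_map φ.toAddMonoidHom ?_
    simpa using isZeroSumFree_basisSeq fun i => pow_ne_zero (n i) (Fact.out : p.Prime).ne_zero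
  · have hT' : (T.map φ).map φ.symm = T := by simp
    rw [← hT', hcross, hcross] at hT
    simpa using prod_one_sub_addChar_eq_zero (X.compAddMonoidHom φ.symm.toAddMonoidHom) hT

end PGroup

section GroupAlgebra

open AddMonoidAlgebra

variable {F G : Type*} [CommRing F] [AddCommGroup G]

lemma exists_sum_eq_of_coeff_prod_ne_zero {ι : Type*} {L : Multiset ι} {g : ι → G} {u : ι → F}
    {x : G} (hx : (L.map fun a => (1 : F[G]) - single (g a) (u a)).prod.coeff x ≠ 0) :
    ∃ T ≤ L.map g, T.sum = x := by
  induction L using Multiset.induction_on generalizing x with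
  | empty =>
    refine ⟨0, le_rfl, ?_⟩
    by_contra h
    have h' : 0 ≠ x := by simpa using h
    exact hx (by simp [one_def, h'])
  | cons a L ih =>
    rw [Multiset.map_cons, Multiset.prod_cons, sub_mul, one_mul, coeff_sub, Finsupp.sub_apply,
      coeff_single_mul_apply] at hx
    rw [Multiset.map_cons]
    by_cases hL : (L.map fun a => (1 : F[G]) - single (g a) (u a)).prod.coeff x = 0
    · obtain ⟨T, hT, hsum⟩ := ih (x := -g a + x) fun h => hx (by rw [hL, h, mul_zero, sub_zero])
      exact ⟨g a ::ₘ T, Multiset.cons_le_cons _ hT, by simp [hsum]⟩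
    · obtain ⟨T, hT, hsum⟩ := ih hL
      exact ⟨T, hT.trans (Multiset.le_cons_self _ _), hsum⟩

lemma coeff_zero_prod_eq_one {ι : Type*} {L : Multiset ι} {g : ι → G} (u : ι → F)
    (hL : IsZeroSumFree (L.map g)) :
    (L.map fun a => (1 : F[G]) - single (g a) (u a)).prod.coeff 0 = 1 := by
  induction L using Multiset.induction_on with
  | empty => simp [one_def]
  | cons a L ih =>
    rw [Multiset.map_cons, isZeroSumFree_cons] at hL
    have hvanish : (L.map fun a => (1 : F[G]) - single (g a) (u a)).prod.coeff (-g a) = 0 := by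
      by_contra h
      obtain ⟨T, hT, hsum⟩ := exists_sum_eq_of_coeff_prod_ne_zero h
      exact hL.2 T hT hsum
    rw [Multiset.map_cons, Multiset.prod_cons, sub_mul, one_mul, coeff_sub, Finsupp.sub_apply,
      coeff_single_mul_apply, add_zero, hvanish, mul_zero, sub_zero, ih hL.1]

/-- The algebra homomorphism `F[H ⊕ C] → F[H]` sending `X^(h, c)` to `χ(c) X^h`, which evaluates
the second component at the character `χ`. -/
noncomputable def evalSnd {H C : Type*} [AddCommGroup H] [AddCommGroup C] (χ : AddChar C F) :
    F[H × C] →ₐ[F] F[H] :=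
  lift F F[H] (H × C)
    { toFun := fun g => single g.toAdd.1 (χ g.toAdd.2)
      map_one' := by simp [one_def]
      map_mul' := fun a b => by simp [AddChar.map_add_eq_mul, single_mul_single] }

@[simp] lemma evalSnd_single {H C : Type*} [AddCommGroup H] [AddCommGroup C] (χ : AddChar C F)
    (g : H × C) (a : F) : evalSnd χ (single g a) = single g.1 (a * χ g.2) := by
  simp [evalSnd]

lemma sum_coeff_zero_evalSnd_mulShift [IsDomain F] {H : Type*} [AddCommGroup H] {n : ℕ} [NeZero n]
    {ψ : AddChar (ZMod n) F} (hψ : ψ.IsPrimitive) (P : F[H × ZMod n]) :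
    ∑ j, (evalSnd (ψ.mulShift j) P).coeff 0 = n * P.coeff 0 := by
  classical
  induction P using AddMonoidAlgebra.induction_linear with
  | zero => simp
  | add x y hx hy => simp [Finset.sum_add_distrib, hx, hy, mul_add]
  | single g a =>
    obtain ⟨h, c⟩ := g
    simp only [evalSnd_single, coeff_single, Finsupp.single_apply, AddChar.mulShift_apply,
      Prod.mk_eq_zero]
    by_cases hh : h = 0
    · simp only [hh, true_and, if_true, ← Finset.mul_sum, AddChar.sum_mulShift _ hψ, ZMod.card]
      split_ifs <;> simp [mul_comm]
    · simp [hh]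

end GroupAlgebra

section LittleKPGroup

variable {p : ℕ} [Fact p.Prime] {H : Type*} [AddCommGroup H] [Finite H]
  (hH : ∃ k, Nat.card H = p ^ k)

include hH

open AddMonoidAlgebra

lemma exists_crossNum_eq_littleK_and_prod_eq_zero (F : Type*) [CommRing F] [CharP F p] :
    ∃ R : Multiset H, IsZeroSumFree R ∧ crossNum R = littleK H ∧
      ∀ T : Multiset H, littleK H < crossNum T →
        (T.map fun h => (1 : F[H]) - single h 1).prod = 0 := by
  have : Nontrivial F := CharP.nontrivial_of_char_ne_one (Fact.out : p.Prime).ne_one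
  have : CharP F[H] p :=
    charP_of_injective_algebraMap (FaithfulSMul.algebraMap_injective F F[H]) p
  obtain ⟨R, hR, hprod⟩ := exists_isZeroSumFree_forall_prod_one_sub_eq_zero hH
    (AddChar.toMonoidHomEquiv.symm (of F H))
  simp only [AddChar.toMonoidHomEquiv_symm_apply, of_apply, toAdd_ofAdd] at hprod
  have hk : littleK H = crossNum R := by
    refine littleK_eq_of_forall_le hR fun S hS => ?_
    by_contra! hlt
    have hcoeff := coeff_zero_prod_eq_one (L := S) (g := id) (fun _ => (1 : F)) (by simpa using hS)
    simp only [id, hprod S hlt] at hcoeff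
    simp at hcoeff
  exact ⟨R, hR, hk.symm, hk ▸ hprod⟩

end LittleKPGroup

section Cover

variable {H : Type*} [AddCommGroup H] {n : ℕ}

/-- In a sequence `L` over `(H ⊕ C_n) × C_n`, the term `((h, c), r)` is a term `(h, c)` of a
sequence over `H ⊕ C_n` together with a shift `r`, and it covers the coset `{j | j c = r c}` of the
annihilator of `c`. The sequence `coveringSeq L j` over `H` collects the components `h` of the terms
covering `j`. -/
def coveringSeq (L : Multiset ((H × ZMod n) × ZMod n)) (j : ZMod n) : Multiset H :=
  (L.filter fun a => j * a.1.2 = a.2 * a.1.2).map fun a => a.1.1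

/-- The cross number of the components in `H` of the terms of `L` covering `j`. -/
noncomputable def coverWeight (L : Multiset ((H × ZMod n) × ZMod n)) (j : ZMod n) : ℝ :=
  crossNum (coveringSeq L j)

lemma coverWeight_zero (j : ZMod n) :
    coverWeight (0 : Multiset ((H × ZMod n) × ZMod n)) j = 0 := by
  simp [coverWeight, coveringSeq]

lemma coverWeight_add (L M : Multiset ((H × ZMod n) × ZMod n)) (j : ZMod n) :
    coverWeight (L + M) j = coverWeight L j + coverWeight M j := by
  simp [coverWeight, coveringSeq]

lemma coverWeight_cons (g : H × ZMod n) (r : ZMod n) (L : Multiset ((H × ZMod n) × ZMod n))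
    (j : ZMod n) :
    coverWeight ((g, r) ::ₘ L) j =
      coverWeight L j + if j * g.2 = r * g.2 then (addOrderOf g.1 : ℝ)⁻¹ else 0 := by
  by_cases h : j * g.2 = r * g.2 <;> simp [coverWeight, coveringSeq, h, add_comm]

lemma coverWeight_congr {L : Multiset ((H × ZMod n) × ZMod n)} {i j : ZMod n}
    (hij : ∀ a ∈ L, i * a.1.2 = j * a.1.2) : coverWeight L i = coverWeight L j := by
  rw [coverWeight, coverWeight, coveringSeq, coveringSeq,
    Multiset.filter_congr fun a ha => by rw [hij a ha]]

lemma exists_nat_coverWeight_eq {L : Multiset ((H × ZMod n) × ZMod n)}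
    (hL : ∀ a ∈ L, a.1.1 = 0) (j : ZMod n) : ∃ N : ℕ, coverWeight L j = N := by
  have hzero : ∀ h ∈ coveringSeq L j, h = 0 := by
    intro h hh
    obtain ⟨a, ha, rfl⟩ := Multiset.mem_map.1 hh
    exact hL a (Multiset.mem_of_mem_filter ha)
  refine ⟨(coveringSeq L j).card, ?_⟩
  rw [coverWeight, Multiset.eq_replicate_card.2 hzero, crossNum_replicate]
  simp

lemma card_filter_mul_eq_mul [NeZero n] (c r : ZMod n) :
    ((Finset.univ.filter fun j : ZMod n => j * c = r * c).card : ℝ) =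
      n * (addOrderOf c : ℝ)⁻¹ := by
  have hfiber : (Finset.univ.filter fun j : ZMod n => j * c = r * c).card =
      Nat.card (AddMonoidHom.mulRight c).ker := by
    refine (AddMonoidHom.card_fiber_eq_of_mem_range (AddMonoidHom.mulRight c) (x := r * c) (y := 0)
      ⟨r, rfl⟩ ⟨0, zero_mul c⟩).trans ?_
    rw [← Fintype.card_subtype, ← Nat.card_eq_fintype_card]
    rfl
  have hrange : (AddMonoidHom.mulRight c).range = AddSubgroup.zmultiples c := by
    ext x
    rw [AddMonoidHom.mem_range, AddSubgroup.mem_zmultiples_iff]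
    constructor
    · rintro ⟨y, rfl⟩
      exact ⟨y.val, by simp⟩
    · rintro ⟨k, rfl⟩
      exact ⟨k, by simp⟩
  have hcard := AddSubgroup.card_mul_index (AddMonoidHom.mulRight c).ker
  rw [AddSubgroup.index_ker, hrange, Nat.card_zmultiples, Nat.card_zmod, ← hfiber] at hcard
  have hc : (addOrderOf c : ℝ) ≠ 0 := mod_cast (addOrderOf_pos c).ne'
  rw [eq_mul_inv_iff_mul_eq₀ hc]
  exact_mod_cast hcard

lemma addOrderOf_eq_mul_of_coprime_card {A B : Type*} [AddGroup A] [AddGroup B]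
    (h : (Nat.card A).Coprime (Nat.card B)) (g : A × B) :
    addOrderOf g = addOrderOf g.1 * addOrderOf g.2 := by
  rw [Prod.addOrderOf]
  exact (h.of_dvd (addOrderOf_dvd_natCard g.1) (addOrderOf_dvd_natCard g.2)).lcm_eq_mul

lemma sum_coverWeight [NeZero n] (hcop : (Nat.card H).Coprime n)
    (L : Multiset ((H × ZMod n) × ZMod n)) :
    ∑ j, coverWeight L j = n * crossNum (L.map Prod.fst) := by
  induction L using Multiset.induction_on with
  | empty => simp [coverWeight_zero]
  | cons a L ih =>
    obtain ⟨g, r⟩ := a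
    simp only [coverWeight_cons]
    rw [Finset.sum_add_distrib, ih, ← Finset.sum_filter, Finset.sum_const, nsmul_eq_mul,
      card_filter_mul_eq_mul, Multiset.map_cons, crossNum_cons,
      addOrderOf_eq_mul_of_coprime_card (by rwa [Nat.card_zmod]), Nat.cast_mul, mul_inv]
    ring

lemma exists_addChar_isPrimitive_of_natCast_ne_zero [NeZero n] (F : Type*) [Field F] [IsAlgClosed F]
    (hn : (n : F) ≠ 0) : ∃ ψ : AddChar (ZMod n) F, ψ.IsPrimitive := by
  have : NeZero (n : F) := ⟨hn⟩
  obtain ⟨ζ, hζ⟩ := HasEnoughRootsOfUnity.exists_primitiveRoot F n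
  exact ⟨_, AddChar.zmodChar_primitive_of_primitive_root n hζ⟩

open AddMonoidAlgebra in
/-- The product of the factors `1 - ψ(-rc) X^(h, c)` over the terms `((h, c), r)` of `L`; the
character `ψ(j ·)` turns a factor into `1 - X^h` when its term covers `j`. -/
noncomputable def twistedProd {F : Type*} [CommRing F] (ψ : AddChar (ZMod n) F)
    (L : Multiset ((H × ZMod n) × ZMod n)) : F[H × ZMod n] :=
  (L.map fun a => 1 - single a.1 (ψ (-(a.2 * a.1.2)))).prod

open AddMonoidAlgebra in
lemma prod_coveringSeq_dvd_evalSnd_twistedProd {F : Type*} [CommRing F] (ψ : AddChar (ZMod n) F)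
    (L : Multiset ((H × ZMod n) × ZMod n)) (j : ZMod n) :
    ((coveringSeq L j).map fun h => (1 : F[H]) - single h 1).prod ∣
      evalSnd (ψ.mulShift j) (twistedProd ψ L) := by
  rw [twistedProd, map_multiset_prod, Multiset.map_map]
  conv_rhs => rw [← Multiset.filter_add_not (fun a => j * a.1.2 = a.2 * a.1.2) L]
  rw [Multiset.map_add, Multiset.prod_add]
  refine Dvd.intro _ (congrArg₂ _ ?_ rfl)
  rw [coveringSeq, Multiset.map_map]
  refine congrArg _ (Multiset.map_congr rfl fun a ha => ?_)
  have hcov : j * a.1.2 = a.2 * a.1.2 := (Multiset.mem_filter.1 ha).2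
  simp [AddChar.mulShift_apply, hcov, ← AddChar.map_add_eq_mul]

theorem exists_coverWeight_le_littleK {p : ℕ} [Fact p.Prime] [Finite H] [NeZero n]
    (hH : ∃ k, Nat.card H = p ^ k) (hpn : ¬ p ∣ n) {L : Multiset ((H × ZMod n) × ZMod n)}
    (hL : IsZeroSumFree (L.map Prod.fst)) : ∃ j, coverWeight L j ≤ littleK H := by
  let F := AlgebraicClosure (ZMod p)
  have hn : (n : F) ≠ 0 := by rwa [Ne, CharP.cast_eq_zero_iff F p]
  obtain ⟨ψ, hψ⟩ := exists_addChar_isPrimitive_of_natCast_ne_zero F hn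
  obtain ⟨-, -, -, hprod⟩ := exists_crossNum_eq_littleK_and_prod_eq_zero hH F
  by_contra! hlt
  have hzero (j : ZMod n) : evalSnd (ψ.mulShift j) (twistedProd ψ L) = 0 :=
    zero_dvd_iff.1 (hprod _ (hlt j) ▸ prod_coveringSeq_dvd_evalSnd_twistedProd ψ L j)
  have hsum := sum_coeff_zero_evalSnd_mulShift hψ (twistedProd ψ L)
  rw [twistedProd, coeff_zero_prod_eq_one _ hL, mul_one, ← twistedProd] at hsum
  exact hn (by rw [← hsum]; simp [hzero])

end Cover

section Balanced

variable {H : Type*} [AddCommGroup H] {n : ℕ}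

lemma mul_eq_mul_of_addOrderOf_dvd [NeZero n] {i j c d : ZMod n}
    (hcd : addOrderOf c ∣ addOrderOf d) (h : i * d = j * d) : i * c = j * c := by
  rw [← sub_eq_zero, ← sub_mul, ← ZMod.natCast_zmod_val (i - j), ← nsmul_eq_mul,
    ← addOrderOf_dvd_iff_nsmul_eq_zero] at h ⊢
  exact hcd.trans h

lemma addOrderOf_dvd_of_le (hn : IsPrimePow n) {c d : ZMod n} (h : addOrderOf c ≤ addOrderOf d) :
    addOrderOf c ∣ addOrderOf d := by
  obtain ⟨q, m, hq, -, rfl⟩ := hn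
  have hdvd (x : ZMod (q ^ m)) : addOrderOf x ∣ q ^ m := by
    simpa using addOrderOf_dvd_natCard x
  obtain ⟨s, -, hs⟩ := (Nat.dvd_prime_pow hq.nat_prime).1 (hdvd c)
  obtain ⟨t, -, ht⟩ := (Nat.dvd_prime_pow hq.nat_prime).1 (hdvd d)
  rw [hs, ht] at h ⊢
  exact pow_dvd_pow q ((Nat.pow_le_pow_iff_right hq.nat_prime.one_lt).1 h)

/-- Any two values of `f` differ by at most `1`: the invariant of the greedy choice of shifts. -/
def IsBalanced {α : Type*} (f : α → ℝ) : Prop :=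
  ∀ i j, f i ≤ f j + 1

lemma coverWeight_eq_of_mul_eq_mul [NeZero n] {L : Multiset ((H × ZMod n) × ZMod n)}
    {i j c : ZMod n} (hL : ∀ a ∈ L, addOrderOf a.1.2 ∣ addOrderOf c) (hij : i * c = j * c) :
    coverWeight L i = coverWeight L j :=
  coverWeight_congr fun a ha => mul_eq_mul_of_addOrderOf_dvd (hL a ha) hij

lemma isBalanced_coverWeight_cons [NeZero n] {L : Multiset ((H × ZMod n) × ZMod n)}
    {g : H × ZMod n} {r : ZMod n} (hL : IsBalanced (coverWeight L))
    (hr : ∀ j, coverWeight L r ≤ coverWeight L j)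
    (hLg : ∀ a ∈ L, addOrderOf a.1.2 ∣ addOrderOf g.2) :
    IsBalanced (coverWeight ((g, r) ::ₘ L)) := by
  intro i j
  have hw0 : 0 ≤ (addOrderOf g.1 : ℝ)⁻¹ := by positivity
  have hw1 : (addOrderOf g.1 : ℝ)⁻¹ ≤ 1 := Nat.cast_inv_le_one _
  have hj : coverWeight L j ≤ coverWeight ((g, r) ::ₘ L) j := by
    rw [coverWeight_cons]
    split_ifs <;> linarith
  rw [coverWeight_cons g r L i]
  split_ifs with hi
  · linarith [coverWeight_eq_of_mul_eq_mul hLg hi, hr j]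
  · linarith [hL i j]

lemma exists_isBalanced_coverWeight_add (hn : IsPrimePow n)
    {L : Multiset ((H × ZMod n) × ZMod n)} (hL : IsBalanced (coverWeight L))
    (B : Multiset (H × ZMod n)) (hLB : ∀ a ∈ L, ∀ b ∈ B, addOrderOf a.1.2 ∣ addOrderOf b.2) :
    ∃ M, M.map Prod.fst = B ∧ IsBalanced (coverWeight (M + L)) := by
  have : NeZero n := ⟨hn.ne_zero⟩
  induction B using Multiset.strongInductionOn with
  | ih B ih =>
    rcases eq_or_ne B 0 with rfl | hB
    · exact ⟨0, rfl, by rwa [zero_add]⟩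
    obtain ⟨b, hb, hmax⟩ := Multiset.exists_max_image (fun b => addOrderOf b.2) hB
    obtain ⟨B, rfl⟩ := Multiset.exists_cons_of_mem hb
    obtain ⟨M, rfl, hM⟩ := ih B (Multiset.lt_cons_self B b) fun a ha c hc =>
      hLB a ha c (Multiset.mem_cons_of_mem hc)
    obtain ⟨r, hr⟩ := Finite.exists_min (coverWeight (M + L))
    refine ⟨(b, r) ::ₘ M, Multiset.map_cons _ _ _, ?_⟩
    rw [Multiset.cons_add]
    refine isBalanced_coverWeight_cons hM hr fun a ha => ?_
    rcases Multiset.mem_add.1 ha with ha | ha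
    · exact addOrderOf_dvd_of_le hn
        (hmax a.1 (Multiset.mem_cons_of_mem (Multiset.mem_map_of_mem Prod.fst ha)))
    · exact hLB a ha b hb

lemma exists_isBalanced_coverWeight (hn : IsPrimePow n) (S : Multiset (H × ZMod n)) :
    ∃ M, M.map Prod.fst = S ∧ IsBalanced (coverWeight M) := by
  have hzero : IsBalanced (coverWeight (0 : Multiset ((H × ZMod n) × ZMod n))) := by
    simp [IsBalanced, coverWeight_zero]
  obtain ⟨M, hM, hbal⟩ := exists_isBalanced_coverWeight_add hn hzero S (by simp)
  exact ⟨M, hM, by rwa [add_zero] at hbal⟩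

lemma coverWeight_cons_eq_of_sub_eq_intCast [Finite H] [NeZero n]
    {L : Multiset ((H × ZMod n) × ZMod n)} {g : H × ZMod n} {r : ZMod n}
    (hL : IsBalanced (coverWeight L)) (hr : ∀ j, coverWeight L r ≤ coverWeight L j)
    (hLg : ∀ a ∈ L, addOrderOf a.1.2 ∣ addOrderOf g.2) (hg : g.1 ≠ 0) {j : ZMod n} {z : ℤ}
    (hz : coverWeight ((g, r) ::ₘ L) j - coverWeight ((g, r) ::ₘ L) r = z) :
    coverWeight ((g, r) ::ₘ L) j = coverWeight ((g, r) ::ₘ L) r := by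
  -- On the coset covered by `(g, r)` the new weights are all equal. Off it, they differ from the
  -- weight at `r` by an element of `[-w, 1 - w]`, where `w = 1 / ord g.1` lies in `(0, 1)`.
  have hord : 1 < addOrderOf g.1 :=
    lt_of_le_of_ne' (addOrderOf_pos g.1) (mt AddMonoid.addOrderOf_eq_one_iff.1 hg)
  have hw0 : 0 < (addOrderOf g.1 : ℝ)⁻¹ := by positivity
  have hw1 : (addOrderOf g.1 : ℝ)⁻¹ < 1 := inv_lt_one_of_one_lt₀ (mod_cast hord)
  rw [← sub_eq_zero, hz]
  rw [coverWeight_cons, coverWeight_cons, if_pos rfl] at hz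
  split_ifs at hz with hj
  · rw [← hz, coverWeight_eq_of_mul_eq_mul hLg hj, sub_self]
  · have hlower : (-1 : ℝ) < z := by linarith [hr j]
    have hupper : (z : ℝ) < 1 := by linarith [hL j r]
    have hlower' : -1 < z := by exact_mod_cast hlower
    have hupper' : z < 1 := by exact_mod_cast hupper
    obtain rfl : z = 0 := by omega
    exact Int.cast_zero

end Balanced

section LittleKProd

variable {p : ℕ} [Fact p.Prime] {H : Type*} [AddCommGroup H] [Finite H] {n : ℕ}

lemma sum_add_ite_eq [NeZero n] (x : ℝ) (j₀ : ZMod n) :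
    ∑ j, (x + if j = j₀ then 0 else 1) = n * (x + (1 - (n : ℝ)⁻¹)) := by
  have hn : (n : ℝ) ≠ 0 := NeZero.ne _
  have hite (j : ZMod n) : (if j = j₀ then (0 : ℝ) else 1) = 1 - if j = j₀ then 1 else 0 := by
    split_ifs <;> norm_num
  simp only [hite, Finset.sum_add_distrib, Finset.sum_sub_distrib, Finset.sum_ite_eq',
    Finset.mem_univ, if_true, Finset.sum_const, Finset.card_univ, ZMod.card, nsmul_eq_mul]
  field_simp

lemma IsBalanced.le_add_ite {α : Type*} [DecidableEq α] {f : α → ℝ} (hf : IsBalanced f)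
    (i₀ i : α) : f i ≤ f i₀ + if i = i₀ then 0 else 1 := by
  split_ifs with h
  · rw [h, add_zero]
  · exact hf i i₀

lemma coprime_of_eq_prime_pow {N : ℕ} (hN : ∃ k, N = p ^ k) (hpn : ¬ p ∣ n) : N.Coprime n := by
  obtain ⟨k, rfl⟩ := hN
  exact ((Nat.Prime.coprime_iff_not_dvd Fact.out).2 hpn).pow_left k

lemma exists_isZeroSumFree_crossNum_eq_littleK (hH : ∃ k, Nat.card H = p ^ k) :
    ∃ R : Multiset H, IsZeroSumFree R ∧ crossNum R = littleK H := by
  obtain ⟨R, hR, hcross, -⟩ := exists_crossNum_eq_littleK_and_prod_eq_zero hH (ZMod p)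
  exact ⟨R, hR, hcross⟩

lemma crossNum_le_littleK_add (hH : ∃ k, Nat.card H = p ^ k) (hn : IsPrimePow n) (hpn : ¬ p ∣ n)
    {S : Multiset (H × ZMod n)} (hS : IsZeroSumFree S) :
    crossNum S ≤ littleK H + (1 - (n : ℝ)⁻¹) := by
  have : NeZero n := ⟨hn.ne_zero⟩
  obtain ⟨L, rfl, hL⟩ := exists_isBalanced_coverWeight hn S
  obtain ⟨j₀, hj₀⟩ := exists_coverWeight_le_littleK hH hpn hS
  have hsum : n * crossNum (L.map Prod.fst) ≤ n * (coverWeight L j₀ + (1 - (n : ℝ)⁻¹)) := by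
    rw [← sum_coverWeight (coprime_of_eq_prime_pow hH hpn), ← sum_add_ite_eq _ j₀]
    exact Finset.sum_le_sum fun j _ => hL.le_add_ite j₀ j
  have hpos : (0 : ℝ) < n := mod_cast NeZero.pos n
  linarith [le_of_mul_le_mul_left hsum hpos]

lemma exists_int_coverWeight_sub_eq (hH : ∃ k, Nat.card H = p ^ k) [NeZero n] (hpn : ¬ p ∣ n)
    {L : Multiset ((H × ZMod n) × ZMod n)} (hS : IsZeroSumFree (L.map Prod.fst))
    (hmax : littleK H + (1 - (n : ℝ)⁻¹) ≤ crossNum (L.map Prod.fst))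
    (hL : IsBalanced (coverWeight L)) (i j : ZMod n) :
    ∃ z : ℤ, coverWeight L i - coverWeight L j = z := by
  obtain ⟨j₀, hj₀⟩ := exists_coverWeight_le_littleK hH hpn hS
  have hle : ∀ j ∈ Finset.univ, coverWeight L j ≤ coverWeight L j₀ + if j = j₀ then 0 else 1 :=
    fun j _ => hL.le_add_ite j₀ j
  have hsum : ∑ j, coverWeight L j = ∑ j, (coverWeight L j₀ + if j = j₀ then 0 else 1) := by
    refine (Finset.sum_le_sum hle).antisymm ?_
    rw [sum_add_ite_eq, sum_coverWeight (coprime_of_eq_prime_pow hH hpn)]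
    gcongr
    linarith
  have heq := (Finset.sum_eq_sum_iff_of_le hle).1 hsum
  refine ⟨(if i = j₀ then 0 else 1) - if j = j₀ then 0 else 1, ?_⟩
  rw [heq i (Finset.mem_univ i), heq j (Finset.mem_univ j)]
  push_cast
  ring

theorem littleK_prod_zmod (hH : ∃ k, Nat.card H = p ^ k) (hn : IsPrimePow n) (hpn : ¬ p ∣ n) :
    littleK (H × ZMod n) = littleK H + (1 - (n : ℝ)⁻¹) := by
  obtain ⟨R, hR, hk⟩ := exists_isZeroSumFree_crossNum_eq_littleK hH
  have hord : addOrderOf ((0, 1) : H × ZMod n) = n := by simp [Prod.addOrderOf]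
  have hfree : IsZeroSumFree (Multiset.replicate (n - 1) ((0, 1) : H × ZMod n)) :=
    isZeroSumFree_replicate (hord.symm ▸ Nat.sub_one_lt hn.ne_zero)
  have hcross : crossNum (Multiset.replicate (n - 1) ((0, 1) : H × ZMod n) +
      R.map (AddMonoidHom.inl H (ZMod n))) = littleK H + (1 - (n : ℝ)⁻¹) := by
    have hn0 : (n : ℝ) ≠ 0 := mod_cast hn.ne_zero
    rw [crossNum_add_map_inl, hk, crossNum_replicate, hord, Nat.cast_pred hn.pos]
    field_simp
    ring
  rw [← hcross]
  refine littleK_eq_of_forall_le (hfree.add_map_inl (fun x hx => ?_) hR) fun S hS => ?_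
  · rw [Multiset.eq_of_mem_replicate hx]
  · exact hcross ▸ crossNum_le_littleK_add hH hn hpn hS

end LittleKProd

section Extremal

variable {p : ℕ} [Fact p.Prime] {H : Type*} [AddCommGroup H] [Finite H] {n : ℕ}

lemma crossNum_le_littleK_of_coverWeight_eq (hH : ∃ k, Nat.card H = p ^ k) [NeZero n]
    (hpn : ¬ p ∣ n) {L : Multiset ((H × ZMod n) × ZMod n)} (hS : IsZeroSumFree (L.map Prod.fst))
    {x : ℝ} (hx : ∀ j, coverWeight L j = x) : crossNum (L.map Prod.fst) ≤ littleK H := by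
  obtain ⟨j, hj⟩ := exists_coverWeight_le_littleK hH hpn hS
  have hsum := sum_coverWeight (coprime_of_eq_prime_pow hH hpn) L
  simp only [hx, Finset.sum_const, Finset.card_univ, ZMod.card, nsmul_eq_mul] at hsum
  rwa [← mul_left_cancel₀ (NeZero.ne (n : ℝ)) hsum, ← hx j]

lemma crossNum_cons_le_littleK (hH : ∃ k, Nat.card H = p ^ k) (hn : IsPrimePow n) (hpn : ¬ p ∣ n)
    {A B : Multiset (H × ZMod n)} {g : H × ZMod n} (hS : IsZeroSumFree (B + g ::ₘ A))
    (hmax : crossNum (B + g ::ₘ A) = littleK (H × ZMod n)) (hg : g.1 ≠ 0)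
    (hA : ∀ a ∈ A, addOrderOf a.2 ≤ addOrderOf g.2)
    (hB : ∀ b ∈ B, addOrderOf g.2 ≤ addOrderOf b.2) (hB0 : ∀ b ∈ B, b.1 = 0) :
    crossNum (g ::ₘ A) ≤ littleK H := by
  have : NeZero n := ⟨hn.ne_zero⟩
  obtain ⟨L, rfl, hL⟩ := exists_isBalanced_coverWeight hn A
  obtain ⟨r, hr⟩ := Finite.exists_min (coverWeight L)
  have hLg : ∀ a ∈ (g, r) ::ₘ L, addOrderOf a.1.2 ≤ addOrderOf g.2 :=
    Multiset.forall_mem_cons.2 ⟨le_rfl, fun a ha => hA a.1 (Multiset.mem_map_of_mem Prod.fst ha)⟩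
  have hLg' : ∀ a ∈ L, addOrderOf a.1.2 ∣ addOrderOf g.2 := fun a ha =>
    addOrderOf_dvd_of_le hn (hLg a (Multiset.mem_cons_of_mem ha))
  obtain ⟨M, rfl, hM⟩ := exists_isBalanced_coverWeight_add hn
    (isBalanced_coverWeight_cons hL hr hLg') B fun a ha b hb =>
      addOrderOf_dvd_of_le hn ((hLg a ha).trans (hB b hb))
  have hM0 : ∀ a ∈ M, a.1.1 = 0 := fun a ha => hB0 a.1 (Multiset.mem_map_of_mem Prod.fst ha)
  rw [← Multiset.map_cons Prod.fst (g, r) L, ← Multiset.map_add] at hS hmax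
  rw [littleK_prod_zmod hH hn hpn] at hmax
  -- The terms of `B` contribute integers to the cover weights, so in the extremal case the layer
  -- `g ::ₘ A` below them has integral weight differences, and its weights are all equal.
  have hconst (j : ZMod n) : coverWeight ((g, r) ::ₘ L) j = coverWeight ((g, r) ::ₘ L) r := by
    obtain ⟨z, hz⟩ := exists_int_coverWeight_sub_eq hH hpn hS hmax.ge hM j r
    obtain ⟨a, ha⟩ := exists_nat_coverWeight_eq hM0 j
    obtain ⟨b, hb⟩ := exists_nat_coverWeight_eq hM0 r
    refine coverWeight_cons_eq_of_sub_eq_intCast hL hr hLg' hg (z := z - a + b) ?_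
    rw [coverWeight_add, coverWeight_add, ha, hb] at hz
    push_cast
    linarith
  have hfree := hS.mono (Multiset.map_le_map (Multiset.le_add_left ((g, r) ::ₘ L) M))
  simpa using crossNum_le_littleK_of_coverWeight_eq hH hpn hfree hconst

lemma exists_le_sum_eq_of_le_crossNum (hH : ∃ k, Nat.card H = p ^ k) (hn : IsPrimePow n)
    (hpn : ¬ p ∣ n) {B : Multiset (H × ZMod n)} (hB : IsZeroSumFree B) (hB0 : ∀ b ∈ B, b.1 = 0)
    (hcross : 1 - (n : ℝ)⁻¹ ≤ crossNum B) (c : ZMod n) : ∃ E ≤ B, E.sum = (0, c) := by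
  have : NeZero n := ⟨hn.ne_zero⟩
  by_contra! hE
  obtain ⟨R, hR, hk⟩ := exists_isZeroSumFree_crossNum_eq_littleK hH
  have hfree : IsZeroSumFree ((0, -c) ::ₘ B) :=
    isZeroSumFree_cons.2 ⟨hB, by simpa using hE⟩
  have hle := crossNum_le_littleK_add hH hn hpn
    (hfree.add_map_inl (Multiset.forall_mem_cons.2 ⟨rfl, hB0⟩) hR)
  have hord : (n : ℝ)⁻¹ ≤ (addOrderOf ((0, -c) : H × ZMod n) : ℝ)⁻¹ := by
    have hpos := addOrderOf_pos ((0, -c) : H × ZMod n)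
    gcongr
    rw [Prod.addOrderOf, addOrderOf_zero, Nat.lcm_one_left]
    simpa using addOrderOf_le_card (x := -c)
  rw [crossNum_add_map_inl, crossNum_cons, hk] at hle
  have hpos : (0 : ℝ) < (n : ℝ)⁻¹ := inv_pos.2 (mod_cast hn.pos)
  linarith

lemma IsZeroSumFree.cons_fst_zero {H C : Type*} [AddCommGroup H] [AddCommGroup C]
    {A B : Multiset (H × C)} {g : H × C} (hS : IsZeroSumFree (g ::ₘ (B + A)))
    (hB0 : ∀ b ∈ B, b.1 = 0) (hB : ∀ c, ∃ E ≤ B, E.sum = (0, c)) :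
    IsZeroSumFree ((g.1, 0) ::ₘ (B + A)) := by
  rw [isZeroSumFree_cons] at hS ⊢
  refine ⟨hS.1, fun T hT hsum => ?_⟩
  obtain ⟨U, hU, V, hV, rfl⟩ := exists_add_eq_of_le_add hT
  obtain ⟨E, hE, hEsum⟩ := hB (-g.2 - V.sum.2)
  have hU0 : U.sum.1 = 0 := by
    rw [← AddMonoidHom.coe_fst, map_multiset_sum]
    exact Multiset.sum_eq_zero (by simpa using fun x y hx => hB0 _ (Multiset.mem_of_le hU hx))
  have hV1 : V.sum.1 = -g.1 := by simpa [hU0] using congrArg Prod.fst hsum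
  refine hS.2 (E + V) (add_le_add hE hV) (Prod.ext ?_ ?_) <;> simp [hEsum, hV1]

lemma crossNum_cons_lt_crossNum_cons_fst (hcop : (Nat.card H).Coprime n) [NeZero n]
    {g : H × ZMod n} (hg : g.2 ≠ 0) (S : Multiset (H × ZMod n)) :
    crossNum (g ::ₘ S) < crossNum ((g.1, 0) ::ₘ S) := by
  have hord : 1 < addOrderOf g.2 :=
    lt_of_le_of_ne' (addOrderOf_pos g.2) (mt AddMonoid.addOrderOf_eq_one_iff.1 hg)
  have hpos := addOrderOf_pos g.1
  rw [crossNum_cons, crossNum_cons, addOrderOf_eq_mul_of_coprime_card (by rwa [Nat.card_zmod]),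
    Prod.addOrderOf, addOrderOf_zero, Nat.lcm_one_right]
  gcongr
  exact lt_mul_of_one_lt_right hpos hord

lemma fst_eq_zero_or_snd_eq_zero_of_cons (hH : ∃ k, Nat.card H = p ^ k) (hn : IsPrimePow n)
    (hpn : ¬ p ∣ n) {g : H × ZMod n} {S : Multiset (H × ZMod n)} (hS : IsZeroSumFree (g ::ₘ S))
    (hmax : crossNum (g ::ₘ S) = littleK (H × ZMod n))
    (hg : ∀ b ∈ S, addOrderOf g.2 < addOrderOf b.2 → b.1 = 0) : g.1 = 0 ∨ g.2 = 0 := by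
  have : NeZero n := ⟨hn.ne_zero⟩
  by_contra! ⟨hg1, hg2⟩
  let B := S.filter fun b => addOrderOf g.2 < addOrderOf b.2
  let A := S.filter fun b => ¬ addOrderOf g.2 < addOrderOf b.2
  have hBA : B + A = S := Multiset.filter_add_not _ S
  have hB0 : ∀ b ∈ B, b.1 = 0 := fun b hb =>
    hg b (Multiset.mem_of_mem_filter hb) (Multiset.mem_filter.1 hb).2
  have hfree : IsZeroSumFree (B + g ::ₘ A) := by rwa [Multiset.add_cons, hBA]
  have hsum : crossNum (B + g ::ₘ A) = littleK (H × ZMod n) := by rwa [Multiset.add_cons, hBA]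
  have hlower := crossNum_cons_le_littleK hH hn hpn hfree hsum hg1
    (fun a ha => not_lt.1 (Multiset.mem_filter.1 ha).2)
    (fun b hb => (Multiset.mem_filter.1 hb).2.le) hB0
  rw [crossNum_add, littleK_prod_zmod hH hn hpn] at hsum
  have hcover := exists_le_sum_eq_of_le_crossNum hH hn hpn
    (hfree.mono (Multiset.le_add_right B (g ::ₘ A))) hB0 (by linarith)
  rw [← hBA] at hS hmax
  -- Since `B` reaches every `(0, c)`, replacing `g` by `(g.1, 0)` keeps the sequence zero-sum free.
  have hlt := crossNum_cons_lt_crossNum_cons_fst (coprime_of_eq_prime_pow hH hpn) hg2 (B + A)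
  rw [hmax, littleK_prod_zmod hH hn hpn] at hlt
  exact hlt.not_ge (crossNum_le_littleK_add hH hn hpn (hS.cons_fst_zero hB0 hcover))

theorem fst_eq_zero_or_snd_eq_zero_of_crossNum_eq_littleK (hH : ∃ k, Nat.card H = p ^ k)
    (hn : IsPrimePow n) (hpn : ¬ p ∣ n) {S : Multiset (H × ZMod n)} (hS : IsZeroSumFree S)
    (hmax : crossNum S = littleK (H × ZMod n)) : ∀ x ∈ S, x.1 = 0 ∨ x.2 = 0 := by
  classical
  by_contra! ⟨x, hxS, hx⟩
  have hmixed : S.filter (fun x => x.1 ≠ 0 ∧ x.2 ≠ 0) ≠ 0 := fun h =>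
    Multiset.notMem_zero x (h ▸ Multiset.mem_filter.2 ⟨hxS, hx⟩)
  obtain ⟨g, hg, hgmax⟩ := Multiset.exists_max_image (fun x => addOrderOf x.2) hmixed
  obtain ⟨hgS, hg1, hg2⟩ := Multiset.mem_filter.1 hg
  obtain ⟨S, rfl⟩ := Multiset.exists_cons_of_mem hgS
  refine (fst_eq_zero_or_snd_eq_zero_of_cons hH hn hpn hS hmax fun b hb hlt => ?_).elim hg1 hg2
  by_contra hb1
  have hb2 : b.2 ≠ 0 := by
    intro h
    have : NeZero n := ⟨hn.ne_zero⟩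
    rw [h, addOrderOf_zero] at hlt
    exact hlt.not_ge (addOrderOf_pos g.2)
  exact hlt.not_ge (hgmax b (Multiset.mem_filter.2 ⟨Multiset.mem_cons_of_mem hb, hb1, hb2⟩))

end Extremal

/-- For distinct primes `p, q`, a finite abelian `p`-group `H`, `m ≥ 1` and
`G = H ⊕ C_{q^m}`: every zero-sum free sequence `S` over `G` with `k(S) = k(G)`
splits as `S = Sp + Sq` with `Sp` a zero-sum free sequence over `H ⊕ {0}` and
`Sq` a zero-sum free sequence over `{0} ⊕ C_{q^m}`. -/
theorem maximal_zero_sum_free_splits_pGroup_prod_zmod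
    (p q : ℕ) (hp : p.Prime) (hq : q.Prime) (hpq : p ≠ q)
    (H : Type*) [AddCommGroup H] [Finite H] (hH : ∃ n : ℕ, Nat.card H = p ^ n)
    (m : ℕ) (hm : 0 < m)
    (S : Multiset (H × ZMod (q ^ m))) (hS : IsZeroSumFree S)
    (hmax : crossNum S = littleK (H × ZMod (q ^ m))) :
    ∃ Sp Sq : Multiset (H × ZMod (q ^ m)),
      S = Sp + Sq ∧ (∀ x ∈ Sp, x.2 = 0) ∧ (∀ x ∈ Sq, x.1 = 0) ∧
        IsZeroSumFree Sp ∧ IsZeroSumFree Sq := by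
  have : Fact p.Prime := ⟨hp⟩
  have hpq' : ¬ p ∣ q ^ m := fun h =>
    hpq ((Nat.prime_dvd_prime_iff_eq hp hq).1 (hp.dvd_of_dvd_pow h))
  have hsplit := fst_eq_zero_or_snd_eq_zero_of_crossNum_eq_littleK hH
    (hq.isPrimePow.pow hm.ne') hpq' hS hmax
  refine ⟨S.filter fun x => x.2 = 0, S.filter fun x => ¬ x.2 = 0,
    (Multiset.filter_add_not _ S).symm, fun x hx => (Multiset.mem_filter.1 hx).2, fun x hx => ?_,
    hS.mono (Multiset.filter_le _ S), hS.mono (Multiset.filter_le _ S)⟩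
  exact (hsplit x (Multiset.mem_of_mem_filter hx)).resolve_right (Multiset.mem_filter.1 hx).2
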